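/- arXiv:1210.7947 — 2 statements merged into one kernel-verified Lean document; each statement's English description precedes it below -/
import Mathlib

section
/- Let h₁, h₂ : [0,1] → ℝ be differentiable functions such that h₁(r) > 0 for all r ∈ [0,1], h₂(0) = 0, h₂(r) > 0 for all r ∈ (0,1], and h₁(r)·h₂′(r) − h₁′(r)·h₂(r) > 0 for all r ∈ (0,1]. Then the map Ψ : ℝ × [0,1] → ℝ² defined by Ψ(s,r) = (eˢ·h₁(r), eˢ·h₂(r)) is injective. -/
open Set Real

/-- Let `h₁, h₂ : [0,1] → ℝ` be differentiable with `h₁ > 0` on `[0,1]`, `h₂ 0 = 0`,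
`h₂ > 0` on `(0,1]`, and the contact condition `h₁ h₂' - h₁' h₂ > 0` on `(0,1]`.
Then `Ψ(s,r) = (eˢ h₁(r), eˢ h₂(r))` is injective on `ℝ × [0,1]`. -/
theorem open_books_injectivity_of_gluing_map
    (h₁ h₂ h₁' h₂' : ℝ → ℝ)
    (hd₁ : ∀ r ∈ Icc (0:ℝ) 1, HasDerivWithinAt h₁ (h₁' r) (Icc 0 1) r)
    (hd₂ : ∀ r ∈ Icc (0:ℝ) 1, HasDerivWithinAt h₂ (h₂' r) (Icc 0 1) r)
    (h₁pos : ∀ r ∈ Icc (0:ℝ) 1, 0 < h₁ r)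
    (h₂zero : h₂ 0 = 0)
    (h₂pos : ∀ r ∈ Ioc (0:ℝ) 1, 0 < h₂ r)
    (hcontact : ∀ r ∈ Ioc (0:ℝ) 1, 0 < h₁ r * h₂' r - h₁' r * h₂ r) :
    ∀ s₁ s₂ : ℝ, ∀ r₁ ∈ Icc (0:ℝ) 1, ∀ r₂ ∈ Icc (0:ℝ) 1,
      (Real.exp s₁ * h₁ r₁, Real.exp s₁ * h₂ r₁)
        = (Real.exp s₂ * h₁ r₂, Real.exp s₂ * h₂ r₂) →
      (s₁, r₁) = (s₂, r₂) := by
  have hq : ∀ r ∈ Icc (0:ℝ) 1, HasDerivWithinAt (fun x => h₂ x / h₁ x)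
      ((h₂' r * h₁ r - h₂ r * h₁' r) / (h₁ r) ^ 2) (Icc 0 1) r := fun r hr =>
    (hd₂ r hr).fun_div (hd₁ r hr) (h₁pos r hr).ne'
  have hmono : StrictMonoOn (fun x => h₂ x / h₁ x) (Icc (0:ℝ) 1) := by
    apply strictMonoOn_of_deriv_pos (convex_Icc 0 1)
    · exact fun r hr => (hq r hr).continuousWithinAt
    · intro r hr
      rw [interior_Icc] at hr
      have hr' : r ∈ Icc (0:ℝ) 1 := ⟨hr.1.le, hr.2.le⟩
      rw [((hq r hr').hasDerivAt (Icc_mem_nhds hr.1 hr.2)).deriv]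
      have h1 := hcontact r ⟨hr.1, hr.2.le⟩
      have h2 := h₁pos r hr'
      apply div_pos
      · linarith
      · positivity
  intro s₁ s₂ r₁ hr₁ r₂ hr₂ h
  rw [Prod.mk.injEq] at h
  obtain ⟨ha, hb⟩ := h
  have p₁ := h₁pos r₁ hr₁
  have p₂ := h₁pos r₂ hr₂
  have hr : r₁ = r₂ := by
    apply hmono.injOn hr₁ hr₂
    change h₂ r₁ / h₁ r₁ = h₂ r₂ / h₁ r₂
    rw [← mul_div_mul_left (h₂ r₁) (h₁ r₁) (Real.exp_pos s₁).ne',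
      ← mul_div_mul_left (h₂ r₂) (h₁ r₂) (Real.exp_pos s₂).ne', ha, hb]
  subst hr
  have hs : s₁ = s₂ := Real.exp_injective (mul_right_cancel₀ p₁.ne' ha)
  rw [hs]
end

section
/- For every c > 0 there exist r₀ > 0, δ ∈ (0, r₀), and smooth functions h₁, h₂ : [0, r₀] → ℝ such that: (i) h₁(r) = c·e^{−r²} and h₂(r) = r² for all r ∈ [0,δ]; (ii) h₁(r) = c·e^{−r} and h₂ is constant for all r ∈ [r₀−δ, r₀]; (iii) h₁(r) > 0 for all r ∈ [0,r₀]; (iv) h₁′(r) < 0 for all r ∈ (0, r₀]; and (v) h₁(r)·h₂′(r) − h₁′(r)·h₂(r) > 0 for all r ∈ (0, r₀]. -/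
open Set Real

/-- For every `c > 0` there are `r₀ > 0`, `δ ∈ (0, r₀)` and smooth functions
`h₁, h₂` such that `h₁ r = c e^{-r²}`, `h₂ r = r²` on `[0,δ]`; `h₁ r = c e^{-r}` and
`h₂` constant on `[r₀ - δ, r₀]`; `h₁ > 0` on `[0,r₀]`; `h₁' < 0` on `(0,r₀]`
(the symplectic condition on the pages); and the contact condition
`h₁ h₂' - h₁' h₂ > 0` on `(0,r₀]`. -/
theorem open_books_normal_form_profile_functions (c : ℝ) (hc : 0 < c) :
    ∃ r₀ : ℝ, 0 < r₀ ∧ ∃ δ : ℝ, δ ∈ Ioo 0 r₀ ∧ ∃ h₁ h₂ : ℝ → ℝ,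
      ContDiff ℝ (⊤ : ℕ∞) h₁ ∧ ContDiff ℝ (⊤ : ℕ∞) h₂ ∧
      (∀ r ∈ Icc (0:ℝ) δ, h₁ r = c * Real.exp (-(r ^ 2)) ∧ h₂ r = r ^ 2) ∧
      (∃ k : ℝ, ∀ r ∈ Icc (r₀ - δ) r₀, h₁ r = c * Real.exp (-r) ∧ h₂ r = k) ∧
      (∀ r ∈ Icc (0:ℝ) r₀, 0 < h₁ r) ∧
      (∀ r ∈ Ioc (0:ℝ) r₀, deriv h₁ r < 0) ∧
      (∀ r ∈ Ioc (0:ℝ) r₀, 0 < h₁ r * deriv h₂ r - deriv h₁ r * h₂ r) := by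
  set s : ℝ → ℝ := fun r => Real.smoothTransition (2 * r - 1 / 2) with hs
  have hsC : ContDiff ℝ (⊤ : ℕ∞) s :=
    Real.smoothTransition.contDiff.comp (by fun_prop)
  have hmono : Monotone s := fun a b hab =>
    Real.smoothTransition.monotone (by linarith)
  have hs0 : ∀ r, 0 ≤ s r := fun r => Real.smoothTransition.nonneg _
  have hs1 : ∀ r, s r ≤ 1 := fun r => Real.smoothTransition.le_one _
  have hz : ∀ r, r ≤ 1 / 4 → s r = 0 := fun r hr =>
    Real.smoothTransition.zero_of_nonpos (by linarith)
  have ho : ∀ r, 3 / 4 ≤ r → s r = 1 := fun r hr =>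
    Real.smoothTransition.one_of_one_le (by linarith)
  have hd : ∀ r, HasDerivAt s (deriv s r) r := fun r =>
    ((hsC.differentiable (by simp)) r).hasDerivAt
  have hd0 : ∀ r, 0 ≤ deriv s r := fun r => hmono.deriv_nonneg
  have hsq : ∀ r : ℝ, HasDerivAt (fun x : ℝ => x ^ 2) (2 * r) r := fun r => by
    simpa using hasDerivAt_pow 2 r
  have D1 : ∀ r, HasDerivAt (fun x => c * Real.exp (-((1 - s x) * x ^ 2 + s x * x)))
      (c * (Real.exp (-((1 - s r) * r ^ 2 + s r * r)) *
        (-((-deriv s r) * r ^ 2 + (1 - s r) * (2 * r) + (deriv s r * r + s r * 1))))) r := fun r =>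
    (((((hd r).const_sub 1).mul (hsq r)).add ((hd r).mul (hasDerivAt_id r))).neg.exp).const_mul c
  have D2 : ∀ r, HasDerivAt (fun x => (1 - s x) * x ^ 2 + s x)
      ((-deriv s r) * r ^ 2 + (1 - s r) * (2 * r) + deriv s r) r := fun r =>
    (((hd r).const_sub 1).mul (hsq r)).add (hd r)
  have G : ∀ r ∈ Ioc (0:ℝ) 1,
      0 < (-deriv s r) * r ^ 2 + (1 - s r) * (2 * r) + (deriv s r * r + s r * 1) := by
    rintro r ⟨h0, h1⟩
    have a : 0 ≤ deriv s r * (r * (1 - r)) :=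
      mul_nonneg (hd0 r) (mul_nonneg h0.le (by linarith))
    have b : 0 < (1 - s r) * (2 * r) + s r := by
      rcases (hs0 r).eq_or_lt with h | h
      · rw [← h]; linarith
      · have := mul_nonneg (sub_nonneg.2 (hs1 r)) h0.le
        linarith
    linarith
  refine ⟨1, one_pos, 1 / 4, ⟨by norm_num, by norm_num⟩,
    fun x => c * Real.exp (-((1 - s x) * x ^ 2 + s x * x)),
    fun x => (1 - s x) * x ^ 2 + s x, by fun_prop, by fun_prop, ?_, ⟨1, ?_⟩, ?_, ?_, ?_⟩
  · rintro r ⟨_, h⟩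
    simp [hz r h]
  · rintro r ⟨h, _⟩
    simp [ho r (by linarith)]
  · intro r _
    positivity
  · intro r hr
    rw [(D1 r).deriv]
    have := mul_pos hc (mul_pos (Real.exp_pos (-((1 - s r) * r ^ 2 + s r * r))) (G r hr))
    linarith
  · intro r hr
    rw [(D1 r).deriv, (D2 r).deriv]
    obtain ⟨h0, h1⟩ := hr
    have e := mul_pos hc (Real.exp_pos (-((1 - s r) * r ^ 2 + s r * r)))
    have p : 0 < (1 - s r) * r ^ 2 + s r := by
      rcases (hs0 r).eq_or_lt with h | h
      · rw [← h]; nlinarith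
      · have := mul_nonneg (sub_nonneg.2 (hs1 r)) (sq_nonneg r)
        linarith
    have q : 0 ≤ (-deriv s r) * r ^ 2 + (1 - s r) * (2 * r) + deriv s r := by
      have a : 0 ≤ deriv s r * (1 - r ^ 2) := mul_nonneg (hd0 r) (by nlinarith)
      have b := mul_nonneg (sub_nonneg.2 (hs1 r)) h0.le
      linarith
    have t := mul_pos e (add_pos_of_nonneg_of_pos q (mul_pos (G r ⟨h0, h1⟩) p))
    linarith
end
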